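/- arXiv:1807.04963 — 3 statements merged into one kernel-verified Lean document; each statement's English description precedes it below -/
import Mathlib

section
/- Let n ≥ 1 and let ∅ ⊊ S₁ ⊊ S₂ ⊊ ⋯ ⊊ Sₙ ⊊ [n+1] be a maximal chain of nonempty proper subsets of [n+1]. Then the determinant of the n×n integer matrix whose columns are u_{S₁}, u_{S₂}, …, u_{Sₙ} equals 1 or −1. -/
/-- The standard basis vector `e_s` of `ℤⁿ` for `s ∈ [n+1]`, with the convention
that the vector corresponding to the last element `n+1` is zero. -/
def permEps (n : ℕ) (s : Fin (n + 1)) : Fin n → ℤ :=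
  fun i => if (i : ℕ) = (s : ℕ) then 1 else 0

/-- The ray generator `u_S` of the permutohedral fan, for `∅ ⊊ S ⊊ [n+1]`:
`u_S = ∑_{s ∈ S} e_s` if `n+1 ∉ S`, and `u_S = -∑_{s ∈ [n+1] ∖ S} e_s` if `n+1 ∈ S`. -/
def permU (n : ℕ) (S : Finset (Fin (n + 1))) : Fin n → ℤ :=
  if Fin.last n ∈ S then -∑ s ∈ Sᶜ, permEps n s else ∑ s ∈ S, permEps n s

/-!
The vectors `u_S` are additive in `S`: `u_S = ∑_{s ∈ S} u_{s}`, and `u_{[n+1]} = 0`. Complete the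
chain by `S₀ = ∅` and `S_{n+1} = [n+1]`, which adds only zero vectors. Counting elements, each
`S_{k+1}` is `S_k` with one new element `s`, so `u_{s} = u_{S_{k+1}} - u_{S_k}`, and every element
of `[n+1]` arises as such an `s`. Hence the columns span the `u_{s}`, among them the standard basis
of `ℤⁿ`, and the determinant is a unit.
-/

open Submodule Set

section Chains

theorem strictMono_snoc_iff {β : Type*} [Preorder β] {n : ℕ} {f : Fin n → β} {b : β} :
    StrictMono (Fin.snoc f b : Fin (n + 1) → β) ↔ StrictMono f ∧ ∀ i, f i < b := by
  rw [← Fin.insertNth_last', Fin.strictMono_insertNth_iff]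
  simp [Fin.castSucc_lt_last, (Fin.castSucc_lt_last _).not_ge]

theorem strictMono_snoc_cons_bot_top {β : Type*} [PartialOrder β] [BoundedOrder β]
    [Nontrivial β] {n : ℕ} {f : Fin n → β} (hf : StrictMono f) (hbot : ∀ i, f i ≠ ⊥)
    (htop : ∀ i, f i ≠ ⊤) :
    StrictMono (Fin.snoc (Fin.cons ⊥ f : Fin (n + 1) → β) ⊤ : Fin (n + 2) → β) := by
  refine strictMono_snoc_iff.2 ⟨Fin.strictMono_cons.2 ⟨fun i => (hbot i).bot_lt, hf⟩, fun i => ?_⟩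
  cases i using Fin.cases with
  | zero => exact bot_lt_top
  | succ i => exact (htop i).lt_top

variable {α : Type*} {m : ℕ} {T : Fin (m + 1) → Finset α}

theorem card_eq_of_strictMono [Fintype α] (hα : Fintype.card α = m) (hT : StrictMono T)
    (k : Fin (m + 1)) : (T k).card = k := by
  let c (j : Fin (m + 1)) : Fin (m + 1) :=
    ⟨(T j).card, Nat.lt_succ_of_le (hα ▸ Finset.card_le_univ (T j))⟩
  have hc : StrictMono c := fun _ _ hij => Finset.card_strictMono (hT hij)
  have hfix : c k = k := le_antisymm hc.apply_le hc.le_apply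
  exact congrArg Fin.val hfix

theorem covBy_succ_of_strictMono [Fintype α] (hα : Fintype.card α = m) (hT : StrictMono T)
    (k : Fin m) : T k.castSucc ⋖ T k.succ := by
  refine (covBy_iff_lt_covBy_grade (𝕆 := ℕ)).2 ⟨hT k.castSucc_lt_succ, ?_⟩
  simp [card_eq_of_strictMono hα hT]

theorem mem_span_range_sum_of_covBy (R : Type*) {M : Type*} [Ring R] [AddCommGroup M]
    [Module R M] (v : α → M) (h₀ : T 0 = ∅) (hT : ∀ k : Fin m, T k.castSucc ⋖ T k.succ)
    {k : Fin (m + 1)} {s : α} (hs : s ∈ T k) :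
    v s ∈ span R (range fun j => ∑ t ∈ T j, v t) := by
  classical
  induction k using Fin.induction with
  | zero => simp [h₀] at hs
  | succ k ih =>
    obtain ⟨a, ha, hinsert⟩ := Finset.covBy_iff_exists_insert.1 (hT k)
    rw [← hinsert, Finset.mem_insert] at hs
    rcases hs with rfl | hs
    · have hdiff : v s = ∑ t ∈ T k.succ, v t - ∑ t ∈ T k.castSucc, v t := by
        rw [← hinsert, Finset.sum_insert ha, add_sub_cancel_right]
      rw [hdiff]
      exact sub_mem (subset_span ⟨_, rfl⟩) (subset_span ⟨_, rfl⟩)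
    · exact ih hs

end Chains

theorem isUnit_det_iff_span_range_col_eq_top {ι R : Type*} [Fintype ι] [DecidableEq ι]
    [CommRing R] {A : Matrix ι ι R} : IsUnit A.det ↔ span R (range A.col) = ⊤ := by
  rw [← Matrix.isUnit_iff_isUnit_det, ← Matrix.mulVec_surjective_iff_isUnit,
    ← Matrix.range_mulVecLin, LinearMap.range_eq_top, Matrix.coe_mulVecLin]

section PermU

variable {n : ℕ}

theorem sum_permEps_apply (S : Finset (Fin (n + 1))) (i : Fin n) :
    (∑ s ∈ S, permEps n s) i = if i.castSucc ∈ S then 1 else 0 := by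
  have permEps_apply (s : Fin (n + 1)) : permEps n s i = if i.castSucc = s then 1 else 0 := by
    simp [permEps, Fin.ext_iff]
  simp [Finset.sum_apply, permEps_apply]

theorem permU_apply (S : Finset (Fin (n + 1))) (i : Fin n) :
    permU n S i = (if i.castSucc ∈ S then 1 else 0) - if Fin.last n ∈ S then 1 else 0 := by
  by_cases hlast : Fin.last n ∈ S <;> by_cases hi : i.castSucc ∈ S <;>
    simp [permU, sum_permEps_apply, hlast, hi, -Finset.sum_apply]

theorem permU_eq_sum_singleton (S : Finset (Fin (n + 1))) :
    permU n S = ∑ s ∈ S, permU n {s} := by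
  ext i
  simp [permU_apply]

theorem permU_empty : permU n ∅ = 0 := by
  simp [permU]

theorem permU_univ : permU n Finset.univ = 0 := by
  ext i
  simp [permU_apply]

theorem permU_singleton_castSucc (i : Fin n) : permU n {i.castSucc} = Pi.single i 1 := by
  ext j
  simp [permU_apply, Pi.single_apply, (Fin.castSucc_lt_last i).ne']

theorem span_range_permU_singleton_eq_top : span ℤ (range fun s => permU n {s}) = ⊤ := by
  rw [eq_top_iff, ← (Pi.basisFun ℤ (Fin n)).span_eq]
  refine span_mono (range_subset_iff.2 fun i => ⟨i.castSucc, ?_⟩)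
  simp only [permU_singleton_castSucc, Pi.basisFun_apply]

theorem span_range_permU_eq_top_of_strictMono {T : Fin (n + 2) → Finset (Fin (n + 1))}
    (hT : StrictMono T) : span ℤ (range fun k => permU n (T k)) = ⊤ := by
  have hα : Fintype.card (Fin (n + 1)) = n + 1 := Fintype.card_fin _
  have h_first : T 0 = ∅ := Finset.card_eq_zero.1 (card_eq_of_strictMono hα hT 0)
  have h_last : T (Fin.last _) = Finset.univ :=
    (Finset.card_eq_iff_eq_univ _).1 ((card_eq_of_strictMono hα hT _).trans hα.symm)
  rw [eq_top_iff, ← span_range_permU_singleton_eq_top, span_le, range_subset_iff]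
  intro s
  simp_rw [permU_eq_sum_singleton (T _)]
  exact mem_span_range_sum_of_covBy ℤ (fun t => permU n {t}) h_first
    (covBy_succ_of_strictMono hα hT) (h_last ▸ Finset.mem_univ s)

end PermU

/-- For any maximal chain `∅ ⊊ S₁ ⊊ ⋯ ⊊ Sₙ ⊊ [n+1]` of nonempty proper subsets of
`[n+1]`, the determinant of the matrix with columns `u_{S₁}, …, u_{Sₙ}` is `±1`. -/
theorem det_permU_chain_eq_one_or_neg_one (n : ℕ) (hn : 1 ≤ n)
    (S : Fin n → Finset (Fin (n + 1)))
    (hne : ∀ p, (S p).Nonempty)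
    (hproper : ∀ p, S p ≠ Finset.univ)
    (hchain : ∀ p q, p < q → S p ⊂ S q) :
    (Matrix.of fun i p => permU n (S p) i).det = 1 ∨
      (Matrix.of fun i p => permU n (S p) i).det = -1 := by
  let T : Fin (n + 2) → Finset (Fin (n + 1)) := Fin.snoc (Fin.cons ⊥ S : Fin (n + 1) → _) ⊤
  have hT : StrictMono T := strictMono_snoc_cons_bot_top (fun p q => hchain p q)
    (fun p => (hne p).ne_empty) hproper
  have hrange : range (fun k => permU n (T k)) =
      insert 0 (insert 0 (range fun p => permU n (S p))) := by
    simp only [T, range_comp' (permU n), Fin.range_snoc, Fin.range_cons, image_insert_eq,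
      Finset.top_eq_univ, Finset.bot_eq_empty, permU_univ, permU_empty]
  have hspan : span ℤ (range fun p => permU n (S p)) = ⊤ := by
    rw [← span_range_permU_eq_top_of_strictMono hT, hrange, span_insert_zero, span_insert_zero]
  exact Int.isUnit_iff.1 (isUnit_det_iff_span_range_col_eq_top.2 hspan)
end

section
/- Fix flag Bott data n₁,…,n_m and matrices A^{(j)}_ℓ as in the context. For every m-tuple (S^1_•,…,S^m_•), where each S^ℓ_• : ∅ ⊊ S^ℓ_1 ⊊ ⋯ ⊊ S^ℓ_{n_ℓ} ⊊ [n_ℓ+1] is a maximal chain of nonempty proper subsets of [n_ℓ+1], the n vectors u^ℓ_{S^ℓ_p} (1 ≤ p ≤ n_ℓ, 1 ≤ ℓ ≤ m) form a ℤ-basis of ℤⁿ; equivalently, the n×n integer matrix with these vectors as columns has determinant 1 or −1. -/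
/-- Standard basis vector `ε_{p,k}` of `ℤⁿ`, `n = n₁ + ⋯ + n_m`, whose coordinates are
indexed by pairs `(q, i)` with `q ∈ [m]`, `i ∈ [n_q]`; by convention
`ε_{p, n_p+1} = 0`. -/
def fbEps (m : ℕ) (n : Fin m → ℕ) (p : Fin m) (k : Fin (n p + 1)) :
    (Σ q : Fin m, Fin (n q)) → ℤ :=
  fun x => if x.1 = p ∧ (x.2 : ℕ) = (k : ℕ) then 1 else 0

/-- The ray generator `u^ℓ_S ∈ ℤⁿ` of the fan of the generic torus orbit closure in
the flag Bott manifold determined by the integer matrices `A^{(j)}_ℓ`, for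
`∅ ⊊ S ⊊ [n_ℓ+1]` and `d = |[n_ℓ+1] ∖ S|`. -/
def fbU (m : ℕ) (n : Fin m → ℕ)
    (A : ∀ j l : Fin m, Matrix (Fin (n j + 1)) (Fin (n l + 1)) ℤ)
    (l : Fin m) (S : Finset (Fin (n l + 1))) : (Σ q : Fin m, Fin (n q)) → ℤ :=
  if Fin.last (n l) ∈ S then
    -(∑ s ∈ Sᶜ, fbEps m n l s) +
      ∑ p : Fin m, ∑ k : Fin (n p + 1),
        (if l < p then
            ∑ z ∈ Finset.univ.filter (fun z : Fin (n l + 1) => (z : ℕ) < Sᶜ.card),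
              A p l k z
          else 0) • fbEps m n p k
  else
    (∑ s ∈ S, fbEps m n l s) -
      ∑ p : Fin m, ∑ k : Fin (n p + 1),
        (if l < p then
            ∑ z ∈ Finset.univ.filter (fun z : Fin (n l + 1) => Sᶜ.card ≤ (z : ℕ)),
              A p l k z
          else 0) • fbEps m n p k

/-!
Ordering the coordinates by blocks `ℓ = 1, …, m`, the generator `u^ℓ_S` vanishes in every block
before `ℓ`, so the matrix is block triangular and the matrices `A` do not affect its determinant.
In block `ℓ`, both cases of the definition of `u^ℓ_S` say that its coordinates are `1_S` minus the
constant `1_S (n_ℓ+1)`. Appending the full set to the chain gives a square 0/1 matrix which,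
reading its rows in the order in which elements enter the chain, is unitriangular. Its last column
is constantly `1`, so subtracting the row of `n_ℓ+1` from the others and expanding along that column
recovers the block, up to sign.
-/

section Determinant

variable {R : Type*} [CommRing R]

theorem det_of_blockTriangular_sigma_fst {α : Type*} {β : α → Type*} [LinearOrder α] [Fintype α]
    [∀ a, Fintype (β a)] [∀ a, DecidableEq (β a)] {M : Matrix (Σ a, β a) (Σ a, β a) R}
    (hM : M.BlockTriangular Sigma.fst) :
    M.det = ∏ a, (M.submatrix (Sigma.mk a) (Sigma.mk a)).det := by
  rw [hM.det_fintype]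
  refine Finset.prod_congr rfl fun a _ => ?_
  exact (Matrix.det_submatrix_equiv_self (Equiv.sigmaSubtype a).symm _).symm

theorem det_dvd_det_submatrix_id {ι : Type*} [Fintype ι] [DecidableEq ι] (M : Matrix ι ι R)
    (f : ι → ι) : M.det ∣ (M.submatrix f id).det := by
  have hmul : (1 : Matrix ι ι R).submatrix f id * M = M.submatrix f id :=
    Matrix.one_submatrix_mul f (Equiv.refl ι) M
  rw [← hmul, Matrix.det_mul]
  exact dvd_mul_left _ _

theorem det_eq_neg_one_pow_mul_det_sub_row_of_col_eq_one {k : ℕ}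
    (M : Matrix (Fin (k + 1)) (Fin (k + 1)) R) (a c : Fin (k + 1)) (hc : ∀ i, M i c = 1) :
    M.det = (-1) ^ (a + c : ℕ) *
      (Matrix.of fun i j => M (a.succAbove i) (c.succAbove j) - M a (c.succAbove j)).det := by
  let N : Matrix (Fin (k + 1)) (Fin (k + 1)) R :=
    Matrix.of fun i j => M i j + (if i = a then 0 else -1) * M a j
  have hdet : N.det = M.det :=
    Matrix.det_eq_of_forall_row_eq_smul_add_const _ a (if_pos rfl) fun _ _ => rfl
  have hpivot : N a c = 1 := by simp [N, hc]
  have hcol : ∀ i, N (a.succAbove i) c = 0 := by simp [N, hc]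
  have hminor : N.submatrix a.succAbove c.succAbove =
      Matrix.of fun i j => M (a.succAbove i) (c.succAbove j) - M a (c.succAbove j) := by
    ext i j
    simp [N, sub_eq_add_neg]
  rw [← hdet, Matrix.det_succ_column N c, Fin.sum_univ_succAbove _ a]
  simp only [hpivot, hcol, hminor, mul_one, mul_zero, zero_mul, Finset.sum_const_zero, add_zero]

end Determinant

section Chain

theorem exists_mem_forall_lt_notMem_of_strictMono {ι α : Type*} [PartialOrder ι] [PredOrder ι]
    {T : ι → Finset α} (hT : StrictMono T) (hne : ∀ p, (T p).Nonempty) (p : ι) :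
    ∃ x ∈ T p, ∀ q < p, x ∉ T q := by
  by_cases hp : IsMin p
  · obtain ⟨x, hx⟩ := hne p
    exact ⟨x, hx, fun q hq => (hp.not_lt hq).elim⟩
  · obtain ⟨x, hx, hx'⟩ := Finset.exists_of_ssubset (hT (Order.pred_lt_of_not_isMin hp))
    exact ⟨x, hx, fun q hq hxq => hx' (hT.monotone (Order.le_pred_of_lt hq) hxq)⟩

variable (R : Type*) [CommRing R]

theorem isUnit_det_indicator_of_strictMono {ι : Type*} [Fintype ι] [LinearOrder ι]
    {T : ι → Finset ι} (hT : StrictMono T) (hne : ∀ p, (T p).Nonempty) :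
    IsUnit (Matrix.of fun i p => if i ∈ T p then (1 : R) else 0).det := by
  let _ := PredOrder.ofLinearWellFoundedGT ι
  choose f hmem hnotMem using exists_mem_forall_lt_notMem_of_strictMono hT hne
  let M : Matrix ι ι R := Matrix.of fun i p => if i ∈ T p then 1 else 0
  have htri : (M.submatrix f id).IsUpperTriangular := fun p q hqp => if_neg (hnotMem p q hqp)
  have hdet : (M.submatrix f id).det = 1 := by
    rw [Matrix.det_of_isUpperTriangular htri]
    exact Finset.prod_eq_one fun p _ => if_pos (hmem p)
  exact isUnit_of_dvd_one ((det_dvd_det_submatrix_id M f).trans hdet.dvd)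

theorem isUnit_det_indicator_sub_indicator_of_strictMono {k : ℕ} {S : Fin k → Finset (Fin (k + 1))}
    (hS : StrictMono S) (hne : ∀ p, (S p).Nonempty) (hproper : ∀ p, S p ≠ Finset.univ)
    (a : Fin (k + 1)) :
    IsUnit (Matrix.of fun (i p : Fin k) =>
      (if a.succAbove i ∈ S p then (1 : R) else 0) - if a ∈ S p then 1 else 0).det := by
  let T : Fin (k + 1) → Finset (Fin (k + 1)) := Fin.snoc S Finset.univ
  have hT : StrictMono T := by
    simpa [T] using (Fin.strictMono_insertNth_iff (Fin.last k) Finset.univ S).2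
      ⟨hS, fun p _ => Finset.ssubset_univ_iff.2 (hproper p), fun p hp => absurd hp (by simp)⟩
  have hTne : ∀ p, (T p).Nonempty :=
    Fin.lastCases (by simp [T]) fun p => by simpa [T] using hne p
  have hunit := isUnit_det_indicator_of_strictMono R hT hTne
  rw [det_eq_neg_one_pow_mul_det_sub_row_of_col_eq_one _ a (Fin.last k)
    fun i => by simp [T]] at hunit
  simpa [T] using isUnit_of_mul_isUnit_right hunit

end Chain

section Generators

variable {m : ℕ} {n : Fin m → ℕ}

theorem fbEps_apply_self (l : Fin m) (k : Fin (n l + 1)) (i : Fin (n l)) :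
    fbEps m n l k ⟨l, i⟩ = if i.castSucc = k then 1 else 0 := by
  simp [fbEps, Fin.ext_iff]

theorem fbEps_apply_of_ne {p : Fin m} {x : Σ q : Fin m, Fin (n q)} (h : x.1 ≠ p)
    (k : Fin (n p + 1)) : fbEps m n p k x = 0 := by
  simp [fbEps, h]

theorem sum_fbEps_apply_self (l : Fin m) (S : Finset (Fin (n l + 1))) (i : Fin (n l)) :
    ∑ s ∈ S, fbEps m n l s ⟨l, i⟩ = if i.castSucc ∈ S then 1 else 0 := by
  simp only [fbEps_apply_self, Finset.sum_ite_eq]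

theorem sum_smul_fbEps_apply (c : ∀ p : Fin m, Fin (n p + 1) → ℤ) (x : Σ q : Fin m, Fin (n q)) :
    (∑ p, ∑ k, c p k • fbEps m n p k) x = c x.1 x.2.castSucc := by
  obtain ⟨q, i⟩ := x
  simp only [Finset.sum_apply, Pi.smul_apply, smul_eq_mul]
  rw [Finset.sum_eq_single_of_mem q (Finset.mem_univ q) fun p _ hp =>
    Finset.sum_eq_zero fun k _ => by rw [fbEps_apply_of_ne hp.symm, mul_zero]]
  simp only [fbEps_apply_self, mul_ite, mul_one, mul_zero, Finset.sum_ite_eq, Finset.mem_univ,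
    if_true]

variable (A : ∀ j l : Fin m, Matrix (Fin (n j + 1)) (Fin (n l + 1)) ℤ)

theorem fbU_apply_of_le {l : Fin m} {x : Σ q : Fin m, Fin (n q)} (h : x.1 ≤ l)
    (S : Finset (Fin (n l + 1))) :
    fbU m n A l S x =
      if Fin.last (n l) ∈ S then -∑ s ∈ Sᶜ, fbEps m n l s x else ∑ s ∈ S, fbEps m n l s x := by
  unfold fbU
  split_ifs
  · rw [Pi.add_apply, sum_smul_fbEps_apply, if_neg h.not_gt, add_zero, Pi.neg_apply,
      Finset.sum_apply]
  · rw [Pi.sub_apply, sum_smul_fbEps_apply, if_neg h.not_gt, sub_zero, Finset.sum_apply]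

theorem fbU_apply_of_lt {l : Fin m} {x : Σ q : Fin m, Fin (n q)} (h : x.1 < l)
    (S : Finset (Fin (n l + 1))) : fbU m n A l S x = 0 := by
  simp [fbU_apply_of_le A h.le, fbEps_apply_of_ne h.ne]

theorem fbU_apply_self (l : Fin m) (S : Finset (Fin (n l + 1))) (i : Fin (n l)) :
    fbU m n A l S ⟨l, i⟩ =
      (if i.castSucc ∈ S then 1 else 0) - if Fin.last (n l) ∈ S then 1 else 0 := by
  rw [fbU_apply_of_le A (le_refl l), sum_fbEps_apply_self, sum_fbEps_apply_self]
  by_cases hi : i.castSucc ∈ S <;> by_cases hlast : Fin.last (n l) ∈ S <;> simp [hi, hlast]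

end Generators

/-- For any `m`-tuple of maximal chains `S^ℓ_• : ∅ ⊊ S^ℓ_1 ⊊ ⋯ ⊊ S^ℓ_{n_ℓ} ⊊ [n_ℓ+1]`,
the `n` vectors `u^ℓ_{S^ℓ_p}` form a `ℤ`-basis of `ℤⁿ`; equivalently the matrix with
these vectors as columns has determinant `±1`. -/
theorem det_fbU_chains_eq_one_or_neg_one (m : ℕ) (hm : 1 ≤ m)
    (n : Fin m → ℕ) (hn : ∀ l, 1 ≤ n l)
    (A : ∀ j l : Fin m, Matrix (Fin (n j + 1)) (Fin (n l + 1)) ℤ)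
    (S : ∀ l : Fin m, Fin (n l) → Finset (Fin (n l + 1)))
    (hne : ∀ l p, (S l p).Nonempty)
    (hproper : ∀ l p, S l p ≠ Finset.univ)
    (hchain : ∀ l, ∀ p q, p < q → S l p ⊂ S l q) :
    (Matrix.of fun i x : Σ q : Fin m, Fin (n q) => fbU m n A x.1 (S x.1 x.2) i).det = 1 ∨
      (Matrix.of fun i x : Σ q : Fin m, Fin (n q) => fbU m n A x.1 (S x.1 x.2) i).det = -1 := by
  let M := Matrix.of fun i x : Σ q : Fin m, Fin (n q) => fbU m n A x.1 (S x.1 x.2) i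
  have htri : M.transpose.BlockTriangular Sigma.fst := fun x i hix => fbU_apply_of_lt A hix _
  have hblock (l : Fin m) : M.submatrix (Sigma.mk l) (Sigma.mk l) = Matrix.of fun i p =>
      (if (Fin.last (n l)).succAbove i ∈ S l p then (1 : ℤ) else 0) -
        if Fin.last (n l) ∈ S l p then 1 else 0 := by
    ext i p
    rw [Fin.succAbove_last]
    exact fbU_apply_self A l (S l p) i
  change M.det = 1 ∨ M.det = -1
  rw [← Int.isUnit_iff, ← Matrix.det_transpose, det_of_blockTriangular_sigma_fst htri,
    IsUnit.prod_univ_iff]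
  intro l
  rw [← Matrix.transpose_submatrix, Matrix.det_transpose, hblock]
  exact isUnit_det_indicator_sub_indicator_of_strictMono ℤ (hchain l) (hne l) (hproper l) _
end

section
/- Fix flag Bott data, ℓ, S, the permutation matrices B_p, the row vectors r^ℓ_i, and the vector u^ℓ_S ∈ ℤ^N as in the context. Then for every 1 ≤ i ≤ n_ℓ+1: if n_ℓ+1 ∉ S, then ⟨r^ℓ_i, u^ℓ_S⟩ = 0 for i ≤ d and ⟨r^ℓ_i, u^ℓ_S⟩ = 1 for i > d; and if n_ℓ+1 ∈ S, then ⟨r^ℓ_i, u^ℓ_S⟩ = −1 for i ≤ d and ⟨r^ℓ_i, u^ℓ_S⟩ = 0 for i > d. Consequently ⟨r^ℓ_{i+1} − r^ℓ_i, u^ℓ_S⟩ = 1 if i = d and 0 otherwise, for 1 ≤ i ≤ n_ℓ. -/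
/-- The permutation `v_{ℓ,S}` of `[n_ℓ+1]` (given on underlying natural numbers):
it lists the elements of `[n_ℓ+1] ∖ S` in increasing order followed by the elements
of `S` in increasing order. -/
def vPermNat {m : ℕ} (n : Fin m → ℕ) (l : Fin m) (S : Finset (Fin (n l + 1)))
    (a : ℕ) : ℕ :=
  ((Sᶜ.sort (· ≤ ·) ++ S.sort (· ≤ ·)).getD a ⟨0, Nat.succ_pos (n l)⟩ : Fin (n l + 1)).val

/-- The permutation matrices `B_p`: `B_ℓ` is the matrix with `(B_ℓ)_{a,b} = 1` iff
`b = v_{ℓ,S}(a)`, and `B_p` is the identity matrix of size `n_p+1` for `p ≠ ℓ`. -/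
def Bmat {m : ℕ} (n : Fin m → ℕ) (l : Fin m) (S : Finset (Fin (n l + 1)))
    (p : Fin m) : Matrix (Fin (n p + 1)) (Fin (n p + 1)) ℤ :=
  Matrix.of fun a b =>
    if p = l then (if (b : ℕ) = vPermNat n l S (a : ℕ) then 1 else 0)
    else (if a = b then 1 else 0)

/-- The product `(B_j A^{(j)}_{i_r})(B_{i_r} A^{(i_r)}_{i_{r−1}}) ⋯ (B_{i_1} A^{(i_1)}_q)`
along a list `[i₁, …, i_r]` (listed in increasing order); the empty list yields
`B_j A^{(j)}_q`. -/
def chainProdB {m : ℕ} (n : Fin m → ℕ)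
    (A : ∀ j p : Fin m, Matrix (Fin (n j + 1)) (Fin (n p + 1)) ℤ)
    (B : ∀ p : Fin m, Matrix (Fin (n p + 1)) (Fin (n p + 1)) ℤ)
    (j : Fin m) : List (Fin m) → ∀ q : Fin m, Matrix (Fin (n j + 1)) (Fin (n q + 1)) ℤ
  | [], q => B j * A j q
  | i :: L, q => chainProdB n A B j L i * (B i * A i q)

/-- `X^{(j)}_q := Σ (B_j A^{(j)}_{i_r})(B_{i_r} A^{(i_r)}_{i_{r−1}}) ⋯ (B_{i_1} A^{(i_1)}_q) B_q
+ B_j A^{(j)}_q B_q`, summed over all strictly increasing sequences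
`q < i₁ < ⋯ < i_r < j` with `r ≥ 1` (nonempty subsets of the interval `(q,j)`);
the empty subset contributes the extra term `B_j A^{(j)}_q B_q`. -/
def Xmat {m : ℕ} (n : Fin m → ℕ)
    (A : ∀ j p : Fin m, Matrix (Fin (n j + 1)) (Fin (n p + 1)) ℤ)
    (B : ∀ p : Fin m, Matrix (Fin (n p + 1)) (Fin (n p + 1)) ℤ)
    (j q : Fin m) : Matrix (Fin (n j + 1)) (Fin (n q + 1)) ℤ :=
  ∑ T ∈ (Finset.Ioo q j).powerset, chainProdB n A B j (T.sort (· ≤ ·)) q * B q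

/-- The `i`-th row `r^j_i ∈ ℤ^N` of the block matrix
`[X^{(j)}_1 X^{(j)}_2 ⋯ X^{(j)}_{j−1} B_j 0 ⋯ 0]`, where the coordinates of `ℤ^N`,
`N = Σ_p (n_p+1)`, are indexed by pairs `(p,k)` with `p ∈ [m]`, `k ∈ [n_p+1]`. -/
def rvec {m : ℕ} (n : Fin m → ℕ)
    (A : ∀ j p : Fin m, Matrix (Fin (n j + 1)) (Fin (n p + 1)) ℤ)
    (B : ∀ p : Fin m, Matrix (Fin (n p + 1)) (Fin (n p + 1)) ℤ)
    (j : Fin m) (i : Fin (n j + 1)) : (Σ p : Fin m, Fin (n p + 1)) → ℤ :=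
  fun x =>
    if x.1 < j then Xmat n A B j x.1 i x.2
    else if h : x.1 = j then B j i (Fin.cast (by rw [h]) x.2)
    else 0

/-- The vector `u^ℓ_S ∈ ℤ^N`: its `(ℓ,s)`-coordinate is `1` for `s ∈ S`
(resp. `−1` for `s ∈ [n_ℓ+1]∖S`) when `n_ℓ+1 ∉ S` (resp. `n_ℓ+1 ∈ S`); for `p > ℓ`
and `1 ≤ k ≤ n_p` its `(p,k)`-coordinate is
`−((A^{(p)}_ℓ)_{k,d+1}+⋯+(A^{(p)}_ℓ)_{k,n_ℓ+1})` when `n_ℓ+1 ∉ S` and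
`(A^{(p)}_ℓ)_{k,1}+⋯+(A^{(p)}_ℓ)_{k,d}` when `n_ℓ+1 ∈ S`, where `d = |[n_ℓ+1]∖S|`;
all remaining coordinates are `0`. -/
def uNvec {m : ℕ} (n : Fin m → ℕ)
    (A : ∀ j p : Fin m, Matrix (Fin (n j + 1)) (Fin (n p + 1)) ℤ)
    (l : Fin m) (S : Finset (Fin (n l + 1))) : (Σ p : Fin m, Fin (n p + 1)) → ℤ :=
  fun x =>
    if h : x.1 = l then
      (if Fin.last (n l) ∈ S then (if Fin.cast (by rw [h]) x.2 ∈ S then 0 else -1)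
       else (if Fin.cast (by rw [h]) x.2 ∈ S then 1 else 0))
    else if l < x.1 then
      (if (x.2 : ℕ) < n x.1 then
        (if Fin.last (n l) ∈ S then
          ∑ z ∈ Finset.univ.filter (fun z : Fin (n l + 1) => (z : ℕ) < Sᶜ.card),
            A x.1 l x.2 z
         else
          -∑ z ∈ Finset.univ.filter (fun z : Fin (n l + 1) => Sᶜ.card ≤ (z : ℕ)),
            A x.1 l x.2 z)
       else 0)
    else 0

/-! The two vectors are supported on complementary blocks apart from block `ℓ`: the row `r^ℓ_i`
vanishes beyond block `ℓ`, and `u^ℓ_S` vanishes before it. Hence the pairing reduces to the `i`-th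
row of `B_ℓ`, which reads off the coordinate of `u^ℓ_S` at `(ℓ, v_{ℓ,S}(i))`. On block `ℓ`, the
vector `u^ℓ_S` is the indicator of `S` minus the constant `[n_ℓ+1 ∈ S]`, and `v_{ℓ,S}(i) ∈ S`
exactly when `d < i`, so `⟨r^ℓ_i, u^ℓ_S⟩ = [d < i] - [n_ℓ+1 ∈ S]` for 1-indexed `i`. -/

open Matrix

section ListingPermutation

theorem getElem_append_mem_right_iff {α : Type*} {L₁ L₂ : List α} (hdisj : L₁.Disjoint L₂)
    {i : ℕ} (hi : i < (L₁ ++ L₂).length) : (L₁ ++ L₂)[i] ∈ L₂ ↔ L₁.length ≤ i := by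
  rcases lt_or_ge i L₁.length with hlt | hge
  · rw [List.getElem_append_left hlt]
    exact iff_of_false (hdisj (List.getElem_mem hlt)) hlt.not_ge
  · rw [List.getElem_append_right hge]
    exact iff_of_true (List.getElem_mem _) hge

theorem length_sort_compl_append_sort {k : ℕ} (S : Finset (Fin k)) :
    (Sᶜ.sort (· ≤ ·) ++ S.sort (· ≤ ·)).length = k := by
  simp only [List.length_append, Finset.length_sort, Finset.card_compl_add_card, Fintype.card_fin]

/-- The permutation `v_{ℓ,S}` as a self-map of the index set, for a subset `S` of any `Fin k`.
It is the typed counterpart of `vPermNat`, whose default value is never reached on `Fin k`. -/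
def vPerm {k : ℕ} (S : Finset (Fin k)) (a : Fin k) : Fin k :=
  (Sᶜ.sort (· ≤ ·) ++ S.sort (· ≤ ·))[(a : ℕ)]'
    (a.isLt.trans_eq (length_sort_compl_append_sort S).symm)

theorem vPerm_mem_iff {k : ℕ} (S : Finset (Fin k)) (a : Fin k) :
    vPerm S a ∈ S ↔ Sᶜ.card ≤ (a : ℕ) := by
  have hdisj : (Sᶜ.sort (· ≤ ·)).Disjoint (S.sort (· ≤ ·)) := fun b hb hb' =>
    Finset.mem_compl.1 ((Finset.mem_sort _).1 hb) ((Finset.mem_sort _).1 hb')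
  rw [← Finset.mem_sort (· ≤ ·), vPerm, getElem_append_mem_right_iff hdisj, Finset.length_sort]

end ListingPermutation

section FlagBott

variable {m : ℕ} (n : Fin m → ℕ) (A : ∀ j p : Fin m, Matrix (Fin (n j + 1)) (Fin (n p + 1)) ℤ)
  (l : Fin m) (S : Finset (Fin (n l + 1)))

theorem vPermNat_eq_val_vPerm (a : Fin (n l + 1)) : vPermNat n l S a = vPerm S a :=
  congrArg Fin.val (List.getD_eq_getElem _ _ _)

theorem Bmat_self_row_eq_single (a : Fin (n l + 1)) :
    Bmat n l S l a = Pi.single (vPerm S a) 1 := by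
  ext b
  simp only [Bmat, of_apply, if_true, vPermNat_eq_val_vPerm, Fin.val_inj, Pi.single_apply]

variable {n l} in
theorem rvec_dotProduct_eq_diag_block (B : ∀ p : Fin m, Matrix (Fin (n p + 1)) (Fin (n p + 1)) ℤ)
    (i : Fin (n l + 1)) {u : (Σ p : Fin m, Fin (n p + 1)) → ℤ} (hu : ∀ x, x.1 < l → u x = 0) :
    rvec n A B l i ⬝ᵥ u = B l i ⬝ᵥ fun k => u ⟨l, k⟩ := by
  have off_diag (p : Fin m) (hp : p ≠ l) (k : Fin (n p + 1)) :
      rvec n A B l i ⟨p, k⟩ * u ⟨p, k⟩ = 0 := by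
    rcases hp.lt_or_gt with hlt | hgt
    · rw [hu ⟨p, k⟩ hlt, mul_zero]
    · simp only [rvec, hgt.not_gt, hp, if_false, dif_neg, not_false_eq_true, zero_mul]
  have diag (k : Fin (n l + 1)) : rvec n A B l i ⟨l, k⟩ = B l i k := by
    simp only [rvec, lt_irrefl, if_false, dif_pos, Fin.cast_eq_self]
  simp only [dotProduct, Fintype.sum_sigma]
  rw [Fintype.sum_eq_single l fun p hp => Finset.sum_eq_zero fun k _ => off_diag p hp k]
  simp only [diag]

variable {n l} in
theorem uNvec_eq_zero_of_lt {x : Σ p : Fin m, Fin (n p + 1)} (hx : x.1 < l) :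
    uNvec n A l S x = 0 := by
  simp only [uNvec, hx.ne, hx.not_gt, dif_neg, if_false, not_false_eq_true]

theorem uNvec_self (k : Fin (n l + 1)) :
    uNvec n A l S ⟨l, k⟩ = (if k ∈ S then 1 else 0) - if Fin.last (n l) ∈ S then 1 else 0 := by
  simp only [uNvec, dif_pos, Fin.cast_eq_self]
  split_ifs <;> rfl

theorem rvec_dotProduct_uNvec (i : Fin (n l + 1)) :
    rvec n A (Bmat n l S) l i ⬝ᵥ uNvec n A l S =
      (if Sᶜ.card ≤ (i : ℕ) then 1 else 0) - if Fin.last (n l) ∈ S then 1 else 0 := by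
  rw [rvec_dotProduct_eq_diag_block A _ i fun _ => uNvec_eq_zero_of_lt A S,
    Bmat_self_row_eq_single, single_one_dotProduct, uNvec_self]
  simp only [vPerm_mem_iff]

theorem rvec_succ_sub_rvec_castSucc_dotProduct_uNvec (i : Fin (n l)) :
    (rvec n A (Bmat n l S) l i.succ - rvec n A (Bmat n l S) l i.castSucc) ⬝ᵥ uNvec n A l S =
      if (i : ℕ) + 1 = Sᶜ.card then 1 else 0 := by
  rw [sub_dotProduct, rvec_dotProduct_uNvec, rvec_dotProduct_uNvec, sub_sub_sub_cancel_right,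
    Fin.val_succ, Fin.val_castSucc]
  split_ifs <;> omega

end FlagBott

/-- The pairings of the rows `r^ℓ_i` of `[X^{(ℓ)}_1 ⋯ X^{(ℓ)}_{ℓ−1} B_ℓ 0 ⋯ 0]` with
`u^ℓ_S` (`i : Fin (n_ℓ+1)` is 0-indexed, so 1-indexed `i ≤ d` reads `(i:ℕ) < d`,
with `d = |Sᶜ|`): if `n_ℓ+1 ∉ S` they are `0` for `i ≤ d` and `1` for `i > d`; if
`n_ℓ+1 ∈ S` they are `−1` for `i ≤ d` and `0` for `i > d`. Consequently
`⟨r^ℓ_{i+1} − r^ℓ_i, u^ℓ_S⟩ = 1` if `i = d` and `0` otherwise, for `1 ≤ i ≤ n_ℓ`. -/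
theorem pairing_r_uN_diag (m : ℕ) (n : Fin m → ℕ) (hn : ∀ p, 1 ≤ n p)
    (A : ∀ j p : Fin m, Matrix (Fin (n j + 1)) (Fin (n p + 1)) ℤ)
    (l : Fin m) (S : Finset (Fin (n l + 1)))
    (hne : S.Nonempty) (hproper : S ≠ Finset.univ) :
    (∀ i : Fin (n l + 1),
      (Fin.last (n l) ∉ S →
        (((i : ℕ) < Sᶜ.card →
          (∑ x : Σ p : Fin m, Fin (n p + 1),
            rvec n A (Bmat n l S) l i x * uNvec n A l S x) = 0) ∧
         (Sᶜ.card ≤ (i : ℕ) →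
          (∑ x : Σ p : Fin m, Fin (n p + 1),
            rvec n A (Bmat n l S) l i x * uNvec n A l S x) = 1))) ∧
      (Fin.last (n l) ∈ S →
        (((i : ℕ) < Sᶜ.card →
          (∑ x : Σ p : Fin m, Fin (n p + 1),
            rvec n A (Bmat n l S) l i x * uNvec n A l S x) = -1) ∧
         (Sᶜ.card ≤ (i : ℕ) →
          (∑ x : Σ p : Fin m, Fin (n p + 1),
            rvec n A (Bmat n l S) l i x * uNvec n A l S x) = 0)))) ∧
    (∀ i : Fin (n l),
      (∑ x : Σ p : Fin m, Fin (n p + 1),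
        (rvec n A (Bmat n l S) l i.succ x - rvec n A (Bmat n l S) l i.castSucc x) *
          uNvec n A l S x) =
      if (i : ℕ) + 1 = Sᶜ.card then 1 else 0) := by
  have pairing := rvec_dotProduct_uNvec n A l S
  refine ⟨fun i => ⟨fun hlast => ⟨fun hi => ?_, fun hi => ?_⟩,
    fun hlast => ⟨fun hi => ?_, fun hi => ?_⟩⟩,
    rvec_succ_sub_rvec_castSucc_dotProduct_uNvec n A l S⟩
  · exact (pairing i).trans (by rw [if_neg hi.not_ge, if_neg hlast, sub_zero])
  · exact (pairing i).trans (by rw [if_pos hi, if_neg hlast, sub_zero])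
  · exact (pairing i).trans (by rw [if_neg hi.not_ge, if_pos hlast, zero_sub])
  · exact (pairing i).trans (by rw [if_pos hi, if_pos hlast, sub_self])
end
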